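/- Main semantic lemma: let Γ be a prime theory, viewed as a world of the canonical model M₀. Then, in M₀, Γ ⊩ P holds if and only if P ∈ Γ, for every moded proposition P. -/

import Mathlib

/-!
Deductive closure and primeness match the forcing clauses of strong propositions, so the content
lies in the classical ones: `A⊕ ∈ Γ` iff no prime theory above `Γ` contains `A⁻`, and dually.
If `A⊕ ∉ Γ`, then `Γ ∪ {A⊖}` is consistent by (IC⁺) and extends to a maximal consistent `Δ`, which
is a prime theory. Such a `Δ` contains `B⊕` or `B⊖` for every `B`, hence, by one introduction rule,
`A⁺` or `A⁻` for every compound `A`; for a variable, Stabilization at `Δ` gives the same, because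
`Δ` is its own only extension. Since `A⊖ ∈ Δ` excludes `A⁺`, the set `Δ` contains `A⁻`.
-/

/-- Pure propositions: A ::= α | A∧B | A∨B | ¬A -/
inductive PureProp : Type
  | var : ℕ → PureProp
  | conj : PureProp → PureProp → PureProp
  | disj : PureProp → PureProp → PureProp
  | neg : PureProp → PureProp
  deriving DecidableEq

/-- Moded propositions: A⁺ (sp), A⁻ (sn), A⊕ (cp), A⊖ (cn). -/
inductive MProp : Type
  | sp : PureProp → MProp
  | sn : PureProp → MProp
  | cp : PureProp → MProp
  | cn : PureProp → MProp
  deriving DecidableEq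

/-- The opposite P~: flips the sign, keeps the strength. -/
def MProp.opp : MProp → MProp
  | .sp A => .sn A
  | .sn A => .sp A
  | .cp A => .cn A
  | .cn A => .cp A

def MProp.isStrong : MProp → Prop
  | .sp _ => True
  | .sn _ => True
  | .cp _ => False
  | .cn _ => False

def MProp.isClassical : MProp → Prop
  | .sp _ => False
  | .sn _ => False
  | .cp _ => True
  | .cn _ => True

/-- Derivability in system PRK (natural deduction), Γ a finite set of moded propositions. -/
inductive PRK : Finset MProp → MProp → Prop
  | ax {Γ : Finset MProp} {P : MProp} : P ∈ Γ → PRK Γ P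
  | abs {Γ : Finset MProp} {P Q : MProp} :
      P.isStrong → PRK Γ P → PRK Γ P.opp → PRK Γ Q
  | iConjP {Γ A B} : PRK Γ (MProp.cp A) → PRK Γ (MProp.cp B) → PRK Γ (MProp.sp (PureProp.conj A B))
  | eConjP1 {Γ A B} : PRK Γ (MProp.sp (PureProp.conj A B)) → PRK Γ (MProp.cp A)
  | eConjP2 {Γ A B} : PRK Γ (MProp.sp (PureProp.conj A B)) → PRK Γ (MProp.cp B)
  | iDisjP1 {Γ A B} : PRK Γ (MProp.cp A) → PRK Γ (MProp.sp (PureProp.disj A B))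
  | iDisjP2 {Γ A B} : PRK Γ (MProp.cp B) → PRK Γ (MProp.sp (PureProp.disj A B))
  | eDisjP {Γ A B P} : PRK Γ (MProp.sp (PureProp.disj A B)) →
      PRK (insert (MProp.cp A) Γ) P → PRK (insert (MProp.cp B) Γ) P → PRK Γ P
  | iNegP {Γ A} : PRK Γ (MProp.cn A) → PRK Γ (MProp.sp (PureProp.neg A))
  | eNegP {Γ A} : PRK Γ (MProp.sp (PureProp.neg A)) → PRK Γ (MProp.cn A)
  | icP {Γ A} : PRK (insert (MProp.cn A) Γ) (MProp.sp A) → PRK Γ (MProp.cp A)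
  | ecP {Γ A} : PRK Γ (MProp.cp A) → PRK Γ (MProp.cn A) → PRK Γ (MProp.sp A)
  | iDisjN {Γ A B} : PRK Γ (MProp.cn A) → PRK Γ (MProp.cn B) → PRK Γ (MProp.sn (PureProp.disj A B))
  | eDisjN1 {Γ A B} : PRK Γ (MProp.sn (PureProp.disj A B)) → PRK Γ (MProp.cn A)
  | eDisjN2 {Γ A B} : PRK Γ (MProp.sn (PureProp.disj A B)) → PRK Γ (MProp.cn B)
  | iConjN1 {Γ A B} : PRK Γ (MProp.cn A) → PRK Γ (MProp.sn (PureProp.conj A B))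
  | iConjN2 {Γ A B} : PRK Γ (MProp.cn B) → PRK Γ (MProp.sn (PureProp.conj A B))
  | eConjN {Γ A B P} : PRK Γ (MProp.sn (PureProp.conj A B)) →
      PRK (insert (MProp.cn A) Γ) P → PRK (insert (MProp.cn B) Γ) P → PRK Γ P
  | iNegN {Γ A} : PRK Γ (MProp.cp A) → PRK Γ (MProp.sn (PureProp.neg A))
  | eNegN {Γ A} : PRK Γ (MProp.sn (PureProp.neg A)) → PRK Γ (MProp.cp A)
  | icN {Γ A} : PRK (insert (MProp.cp A) Γ) (MProp.sn A) → PRK Γ (MProp.cn A)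
  | ecN {Γ A} : PRK Γ (MProp.cn A) → PRK Γ (MProp.cp A) → PRK Γ (MProp.sn A)

/-- A Kripke model for PRK. -/
structure KripkeModel (W : Type) where
  le : W → W → Prop
  le_refl : ∀ w, le w w
  le_trans : ∀ {a b c}, le a b → le b c → le a c
  le_antisymm : ∀ {a b}, le a b → le b a → a = b
  Vp : W → ℕ → Prop
  Vn : W → ℕ → Prop
  monoP : ∀ {w w'}, le w w' → ∀ {a}, Vp w a → Vp w' a
  monoN : ∀ {w w'}, le w w' → ∀ {a}, Vn w a → Vn w' a
  stab : ∀ w a, ∃ w', le w w' ∧ Xor' (Vp w' a) (Vn w' a)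

def PureProp.size : PureProp → ℕ
  | .var _ => 1
  | .conj A B => 1 + A.size + B.size
  | .disj A B => 1 + A.size + B.size
  | .neg A => 1 + A.size

def MProp.meas : MProp → ℕ
  | .sp A => 2 * A.size
  | .sn A => 2 * A.size
  | .cp A => 2 * A.size + 1
  | .cn A => 2 * A.size + 1

/-- The forcing relation w ⊩ P, defined by recursion on the measure. -/
def Forces {W : Type} (M : KripkeModel W) : W → MProp → Prop
  | w, .sp (.var a) => M.Vp w a
  | w, .sn (.var a) => M.Vn w a
  | w, .sp (.conj A B) => Forces M w (.cp A) ∧ Forces M w (.cp B)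
  | w, .sn (.conj A B) => Forces M w (.cn A) ∨ Forces M w (.cn B)
  | w, .sp (.disj A B) => Forces M w (.cp A) ∨ Forces M w (.cp B)
  | w, .sn (.disj A B) => Forces M w (.cn A) ∧ Forces M w (.cn B)
  | w, .sp (.neg A) => Forces M w (.cn A)
  | w, .sn (.neg A) => Forces M w (.cp A)
  | w, .cp A => ∀ w', M.le w w' → ¬ Forces M w' (.sn A)
  | w, .cn A => ∀ w', M.le w w' → ¬ Forces M w' (.sp A)
termination_by w P => P.meas
decreasing_by all_goals simp [MProp.meas, PureProp.size] <;> omega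

/-- Derivability from a possibly infinite set of moded propositions. -/
def SDeriv (Γ : Set MProp) (P : MProp) : Prop :=
  ∃ Δ : Finset MProp, ↑Δ ⊆ Γ ∧ PRK Δ P

/-- Consistency of a possibly infinite set of moded propositions. -/
def SetConsistent (Γ : Set MProp) : Prop := ∃ P, ¬ SDeriv Γ P

/-- A prime theory: closed by deduction, consistent, and disjunctive. -/
def PrimeTheory (Γ : Set MProp) : Prop :=
  (∀ P, SDeriv Γ P → P ∈ Γ) ∧
  SetConsistent Γ ∧
  (∀ A B, MProp.sp (PureProp.disj A B) ∈ Γ → MProp.cp A ∈ Γ ∨ MProp.cp B ∈ Γ) ∧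
  (∀ A B, MProp.sn (PureProp.conj A B) ∈ Γ → MProp.cn A ∈ Γ ∨ MProp.cn B ∈ Γ)

namespace PRK

variable {Γ Δ : Finset MProp} {P Q : MProp} {A : PureProp}

/- Asking each hypothesis to be derivable in every larger context makes the assumption pass under
the bound hypotheses of a rule, so this one induction yields both weakening and cut. -/
theorem subst_of_forall_superset (h : PRK Γ P)
    (hΔ : ∀ Q ∈ Γ, ∀ Θ : Finset MProp, Δ ⊆ Θ → PRK Θ Q) : PRK Δ P := by
  have under_binder {Γ Δ : Finset MProp} (R : MProp)
      (hΔ : ∀ Q ∈ Γ, ∀ Θ : Finset MProp, Δ ⊆ Θ → PRK Θ Q) :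
      ∀ Q ∈ insert R Γ, ∀ Θ : Finset MProp, insert R Δ ⊆ Θ → PRK Θ Q :=
    Finset.forall_mem_insert _ _ _ |>.2
      ⟨fun _ hΘ => .ax (hΘ (Finset.mem_insert_self _ _)),
        fun Q hQ Θ hΘ => hΔ Q hQ Θ ((Finset.subset_insert _ _).trans hΘ)⟩
  induction h generalizing Δ with
  | ax h => exact hΔ _ h Δ subset_rfl
  | abs hP _ _ ih ih' => exact .abs hP (ih hΔ) (ih' hΔ)
  | iConjP _ _ ihA ihB => exact .iConjP (ihA hΔ) (ihB hΔ)
  | eConjP1 _ ih => exact .eConjP1 (ih hΔ)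
  | eConjP2 _ ih => exact .eConjP2 (ih hΔ)
  | iDisjP1 _ ih => exact .iDisjP1 (ih hΔ)
  | iDisjP2 _ ih => exact .iDisjP2 (ih hΔ)
  | eDisjP _ _ _ ih ihA ihB =>
    exact .eDisjP (ih hΔ) (ihA (under_binder _ hΔ)) (ihB (under_binder _ hΔ))
  | iNegP _ ih => exact .iNegP (ih hΔ)
  | eNegP _ ih => exact .eNegP (ih hΔ)
  | icP _ ih => exact .icP (ih (under_binder _ hΔ))
  | ecP _ _ ih ih' => exact .ecP (ih hΔ) (ih' hΔ)
  | iDisjN _ _ ihA ihB => exact .iDisjN (ihA hΔ) (ihB hΔ)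
  | eDisjN1 _ ih => exact .eDisjN1 (ih hΔ)
  | eDisjN2 _ ih => exact .eDisjN2 (ih hΔ)
  | iConjN1 _ ih => exact .iConjN1 (ih hΔ)
  | iConjN2 _ ih => exact .iConjN2 (ih hΔ)
  | eConjN _ _ _ ih ihA ihB =>
    exact .eConjN (ih hΔ) (ihA (under_binder _ hΔ)) (ihB (under_binder _ hΔ))
  | iNegN _ ih => exact .iNegN (ih hΔ)
  | eNegN _ ih => exact .eNegN (ih hΔ)
  | icN _ ih => exact .icN (ih (under_binder _ hΔ))
  | ecN _ _ ih ih' => exact .ecN (ih hΔ) (ih' hΔ)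

theorem weaken (h : PRK Γ P) (hΓΔ : Γ ⊆ Δ) : PRK Δ P :=
  h.subst_of_forall_superset fun _ hQ _ hΘ => .ax (hΘ (hΓΔ hQ))

theorem cut (hP : PRK Γ P) (hQ : PRK (insert P Γ) Q) : PRK Γ Q :=
  hQ.subst_of_forall_superset <| Finset.forall_mem_insert _ _ _ |>.2
    ⟨fun _ hΘ => hP.weaken hΘ, fun _ hR _ hΘ => .ax (hΘ hR)⟩

theorem absurd_sp_sn (hp : PRK Γ (.sp A)) (hn : PRK Γ (.sn A)) : PRK Γ Q :=
  .abs (P := .sp A) trivial hp hn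

theorem absurd_cp_sn (hp : PRK Γ (.cp A)) (hn : PRK Γ (.sn A)) : PRK Γ Q :=
  have hcn : PRK Γ (.cn A) := .icN (hn.weaken (Finset.subset_insert _ _))
  absurd_sp_sn (.ecP hp hcn) hn

theorem absurd_cn_sp (hn : PRK Γ (.cn A)) (hp : PRK Γ (.sp A)) : PRK Γ Q :=
  have hcp : PRK Γ (.cp A) := .icP (hp.weaken (Finset.subset_insert _ _))
  absurd_sp_sn hp (.ecN hn hcp)

end PRK

namespace SDeriv

variable {S T : Set MProp} {P Q R : MProp} {A : PureProp}

theorem of_mem (h : P ∈ S) : SDeriv S P :=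
  ⟨{P}, by simpa using h, .ax (Finset.mem_singleton_self P)⟩

theorem mono (hST : S ⊆ T) : SDeriv S P → SDeriv T P
  | ⟨Δ, hΔ, h⟩ => ⟨Δ, hΔ.trans hST, h⟩

theorem exists_common_finset (hP : SDeriv S P) (hQ : SDeriv S Q) :
    ∃ Δ : Finset MProp, ↑Δ ⊆ S ∧ PRK Δ P ∧ PRK Δ Q := by
  obtain ⟨Δ, hΔ, hP⟩ := hP
  obtain ⟨Θ, hΘ, hQ⟩ := hQ
  exact ⟨Δ ∪ Θ, by simp [hΔ, hΘ], hP.weaken Finset.subset_union_left,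
    hQ.weaken Finset.subset_union_right⟩

theorem map₂ (rule : ∀ {Δ : Finset MProp}, PRK Δ P → PRK Δ Q → PRK Δ R)
    (hP : SDeriv S P) (hQ : SDeriv S Q) : SDeriv S R := by
  obtain ⟨Δ, hΔ, hP, hQ⟩ := hP.exists_common_finset hQ
  exact ⟨Δ, hΔ, rule hP hQ⟩

theorem exists_finset_of_insert (h : SDeriv (insert P S) Q) :
    ∃ Δ : Finset MProp, ↑Δ ⊆ S ∧ PRK (insert P Δ) Q := by
  obtain ⟨Δ, hΔ, h⟩ := h
  refine ⟨Δ.erase P, ?_, h.weaken (Finset.insert_erase_subset P Δ)⟩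
  rwa [Finset.coe_erase, Set.sdiff_singleton_subset_iff]

theorem cut (hP : SDeriv S P) (hQ : SDeriv (insert P S) Q) : SDeriv S Q := by
  obtain ⟨Δ, hΔ, hP⟩ := hP
  obtain ⟨Θ, hΘ, hQ⟩ := hQ.exists_finset_of_insert
  exact ⟨Δ ∪ Θ, by simp [hΔ, hΘ], (hP.weaken Finset.subset_union_left).cut
    (hQ.weaken (Finset.insert_subset_insert P Finset.subset_union_right))⟩

theorem icP (h : SDeriv (insert (.cn A) S) (.sp A)) : SDeriv S (.cp A) := by
  obtain ⟨Δ, hΔ, h⟩ := h.exists_finset_of_insert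
  exact ⟨Δ, hΔ, .icP h⟩

theorem icN (h : SDeriv (insert (.cp A) S) (.sn A)) : SDeriv S (.cn A) := by
  obtain ⟨Δ, hΔ, h⟩ := h.exists_finset_of_insert
  exact ⟨Δ, hΔ, .icN h⟩

end SDeriv

namespace SetConsistent

variable {S T : Set MProp} {P : MProp} {A : PureProp}

theorem anti (hT : SetConsistent T) (hST : S ⊆ T) : SetConsistent S :=
  hT.imp fun _ => mt (SDeriv.mono hST)

theorem sn_notMem_of_sp_mem (hS : SetConsistent S) (hp : .sp A ∈ S) : .sn A ∉ S := by
  obtain ⟨R, hR⟩ := hS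
  exact fun hn => hR (.map₂ .absurd_sp_sn (.of_mem hp) (.of_mem hn))

theorem sn_notMem_of_cp_mem (hS : SetConsistent S) (hp : .cp A ∈ S) : .sn A ∉ S := by
  obtain ⟨R, hR⟩ := hS
  exact fun hn => hR (.map₂ .absurd_cp_sn (.of_mem hp) (.of_mem hn))

theorem sp_notMem_of_cn_mem (hS : SetConsistent S) (hn : .cn A ∈ S) : .sp A ∉ S := by
  obtain ⟨R, hR⟩ := hS
  exact fun hp => hR (.map₂ .absurd_cn_sp (.of_mem hn) (.of_mem hp))

theorem insert_of_sderiv (hS : SetConsistent S) (hP : SDeriv S P) :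
    SetConsistent (insert P S) :=
  hS.imp fun _ => mt hP.cut

theorem insert_cn_of_not_sderiv_cp (h : ¬ SDeriv S (.cp A)) : SetConsistent (insert (.cn A) S) :=
  ⟨.sp A, mt SDeriv.icP h⟩

theorem insert_cp_of_not_sderiv_cn (h : ¬ SDeriv S (.cn A)) : SetConsistent (insert (.cp A) S) :=
  ⟨.sn A, mt SDeriv.icN h⟩

theorem isOfFiniteCharacter : Order.IsOfFiniteCharacter {S | SetConsistent S} := by
  refine fun S => ⟨fun hS T hTS _ => hS.anti hTS, fun hfin => ?_⟩
  by_contra hS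
  have derives_all (P : MProp) : SDeriv S P := by_contra fun hP => hS ⟨P, hP⟩
  obtain ⟨Δ, hΔ, hp, hn⟩ :=
    (derives_all (.sp (.var 0))).exists_common_finset (derives_all (.sn (.var 0)))
  obtain ⟨R, hR⟩ := hfin Δ hΔ Δ.finite_toSet
  exact hR ⟨Δ, subset_rfl, hp.absurd_sp_sn hn⟩

end SetConsistent

/-- Sets of moded propositions that contain everything derivable from them: the first of the
conditions on a prime theory. -/
def DeductivelyClosed (S : Set MProp) : Prop := ∀ P, SDeriv S P → P ∈ S

namespace DeductivelyClosed

variable {S : Set MProp} {P Q R : MProp} {A B : PureProp}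

theorem mem_of_rule₂ (hS : DeductivelyClosed S)
    (rule : ∀ {Δ : Finset MProp}, PRK Δ P → PRK Δ Q → PRK Δ R) (hP : P ∈ S) (hQ : Q ∈ S) :
    R ∈ S :=
  hS R (.map₂ rule (.of_mem hP) (.of_mem hQ))

theorem mem_of_rule (hS : DeductivelyClosed S)
    (rule : ∀ {Δ : Finset MProp}, PRK Δ P → PRK Δ Q) (hP : P ∈ S) : Q ∈ S :=
  hS.mem_of_rule₂ (fun h _ => rule h) hP hP

theorem sp_conj_mem_iff (hS : DeductivelyClosed S) :
    .sp (.conj A B) ∈ S ↔ .cp A ∈ S ∧ .cp B ∈ S :=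
  ⟨fun h => ⟨hS.mem_of_rule .eConjP1 h, hS.mem_of_rule .eConjP2 h⟩,
    fun h => hS.mem_of_rule₂ .iConjP h.1 h.2⟩

theorem sn_disj_mem_iff (hS : DeductivelyClosed S) :
    .sn (.disj A B) ∈ S ↔ .cn A ∈ S ∧ .cn B ∈ S :=
  ⟨fun h => ⟨hS.mem_of_rule .eDisjN1 h, hS.mem_of_rule .eDisjN2 h⟩,
    fun h => hS.mem_of_rule₂ .iDisjN h.1 h.2⟩

theorem sp_neg_mem_iff (hS : DeductivelyClosed S) : .sp (.neg A) ∈ S ↔ .cn A ∈ S :=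
  ⟨hS.mem_of_rule .eNegP, hS.mem_of_rule .iNegP⟩

theorem sn_neg_mem_iff (hS : DeductivelyClosed S) : .sn (.neg A) ∈ S ↔ .cp A ∈ S :=
  ⟨hS.mem_of_rule .eNegN, hS.mem_of_rule .iNegN⟩

end DeductivelyClosed

namespace PrimeTheory

variable {S : Set MProp} {A B : PureProp}

theorem deductivelyClosed (hS : PrimeTheory S) : DeductivelyClosed S := hS.1

theorem setConsistent (hS : PrimeTheory S) : SetConsistent S := hS.2.1

theorem sp_disj_mem_iff (hS : PrimeTheory S) :
    .sp (.disj A B) ∈ S ↔ .cp A ∈ S ∨ .cp B ∈ S :=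
  ⟨hS.2.2.1 A B,
    Or.rec (hS.deductivelyClosed.mem_of_rule .iDisjP1) (hS.deductivelyClosed.mem_of_rule .iDisjP2)⟩

theorem sn_conj_mem_iff (hS : PrimeTheory S) :
    .sn (.conj A B) ∈ S ↔ .cn A ∈ S ∨ .cn B ∈ S :=
  ⟨hS.2.2.2 A B,
    Or.rec (hS.deductivelyClosed.mem_of_rule .iConjN1) (hS.deductivelyClosed.mem_of_rule .iConjN2)⟩

end PrimeTheory

/-- Consistent sets with no consistent proper superset; these are the worlds of the canonical
model at which every pure proposition is decided. -/
def MaximalConsistent (S : Set MProp) : Prop := Maximal SetConsistent S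

theorem SetConsistent.exists_maximalConsistent_superset {S : Set MProp} (hS : SetConsistent S) :
    ∃ T, S ⊆ T ∧ MaximalConsistent T :=
  SetConsistent.isOfFiniteCharacter.exists_maximal hS

namespace MaximalConsistent

variable {S : Set MProp} {P : MProp}

theorem mem_of_setConsistent_insert (hS : MaximalConsistent S)
    (hP : SetConsistent (insert P S)) : P ∈ S :=
  hS.2 hP (Set.subset_insert P S) (Set.mem_insert P S)

theorem deductivelyClosed (hS : MaximalConsistent S) : DeductivelyClosed S :=
  fun _ hP => hS.mem_of_setConsistent_insert (hS.1.insert_of_sderiv hP)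

theorem cp_mem_or_cn_mem (hS : MaximalConsistent S) (A : PureProp) : .cp A ∈ S ∨ .cn A ∈ S :=
  (em (SDeriv S (.cp A))).imp (hS.deductivelyClosed _) fun h =>
    hS.mem_of_setConsistent_insert (.insert_cn_of_not_sderiv_cp h)

theorem primeTheory (hS : MaximalConsistent S) : PrimeTheory S := by
  have closed := hS.deductivelyClosed
  refine ⟨closed, hS.1, fun A B hp => ?_, fun A B hn => ?_⟩
  · by_contra! h
    have hA := (hS.cp_mem_or_cn_mem A).resolve_left h.1
    have hB := (hS.cp_mem_or_cn_mem B).resolve_left h.2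
    exact hS.1.sn_notMem_of_sp_mem hp (closed.sn_disj_mem_iff.2 ⟨hA, hB⟩)
  · by_contra! h
    have hA := (hS.cp_mem_or_cn_mem A).resolve_right h.1
    have hB := (hS.cp_mem_or_cn_mem B).resolve_right h.2
    exact hS.1.sn_notMem_of_sp_mem (closed.sp_conj_mem_iff.2 ⟨hA, hB⟩) hn

theorem sp_mem_or_sn_mem (hS : MaximalConsistent S)
    (hvar : ∀ a, .sp (.var a) ∈ S ∨ .sn (.var a) ∈ S) (A : PureProp) :
    .sp A ∈ S ∨ .sn A ∈ S := by
  have closed := hS.deductivelyClosed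
  cases A with
  | var a => exact hvar a
  | conj A B =>
    rw [closed.sp_conj_mem_iff, hS.primeTheory.sn_conj_mem_iff]
    have hA := hS.cp_mem_or_cn_mem A
    have hB := hS.cp_mem_or_cn_mem B
    tauto
  | disj A B =>
    rw [hS.primeTheory.sp_disj_mem_iff, closed.sn_disj_mem_iff]
    have hA := hS.cp_mem_or_cn_mem A
    have hB := hS.cp_mem_or_cn_mem B
    tauto
  | neg A =>
    rw [closed.sp_neg_mem_iff, closed.sn_neg_mem_iff]
    exact (hS.cp_mem_or_cn_mem A).symm

end MaximalConsistent

/-- The conditions identifying a Kripke model on the prime theories with the canonical model `M₀`.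
A predicate is used instead of a construction so that Stabilization comes with the model. -/
structure KripkeModel.IsCanonical (M : KripkeModel {Γ : Set MProp // PrimeTheory Γ}) : Prop where
  le_iff : ∀ Γ Δ, M.le Γ Δ ↔ Γ.1 ⊆ Δ.1
  Vp_iff : ∀ Γ a, M.Vp Γ a ↔ .sp (.var a) ∈ Γ.1
  Vn_iff : ∀ Γ a, M.Vn Γ a ↔ .sn (.var a) ∈ Γ.1

namespace KripkeModel.IsCanonical

variable {M : KripkeModel {Γ : Set MProp // PrimeTheory Γ}}
  {Γ : {Γ : Set MProp // PrimeTheory Γ}} {P : MProp} {A : PureProp}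

theorem sp_var_mem_or_sn_var_mem (hM : M.IsCanonical) (hΓ : MaximalConsistent Γ.1) (a : ℕ) :
    .sp (.var a) ∈ Γ.1 ∨ .sn (.var a) ∈ Γ.1 := by
  obtain ⟨Δ, hΓΔ, hΔ⟩ := M.stab Γ a
  have hΔΓ : Δ.1 ⊆ Γ.1 := hΓ.2 Δ.2.setConsistent ((hM.le_iff Γ Δ).1 hΓΔ)
  rw [hM.Vp_iff, hM.Vn_iff] at hΔ
  exact (Xor.or hΔ).imp (@hΔΓ _) (@hΔΓ _)

theorem exists_ge_mem_forall_sp_mem_or_sn_mem (hM : M.IsCanonical)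
    (hP : SetConsistent (insert P Γ.1)) :
    ∃ Δ, M.le Γ Δ ∧ P ∈ Δ.1 ∧ ∀ A, .sp A ∈ Δ.1 ∨ .sn A ∈ Δ.1 := by
  obtain ⟨T, hPT, hT⟩ := hP.exists_maximalConsistent_superset
  obtain ⟨hPT, hΓT⟩ := Set.insert_subset_iff.1 hPT
  exact ⟨⟨T, hT.primeTheory⟩, (hM.le_iff _ _).2 hΓT, hPT,
    hT.sp_mem_or_sn_mem (hM.sp_var_mem_or_sn_var_mem (Γ := ⟨T, hT.primeTheory⟩) hT)⟩

theorem cp_mem_iff (hM : M.IsCanonical) : .cp A ∈ Γ.1 ↔ ∀ Δ, M.le Γ Δ → .sn A ∉ Δ.1 := by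
  refine ⟨fun h Δ hΓΔ => Δ.2.setConsistent.sn_notMem_of_cp_mem ((hM.le_iff Γ Δ).1 hΓΔ h),
    fun h => by_contra fun hcp => ?_⟩
  obtain ⟨Δ, hΓΔ, hcn, hΔ⟩ := hM.exists_ge_mem_forall_sp_mem_or_sn_mem
    (.insert_cn_of_not_sderiv_cp (mt (Γ.2.deductivelyClosed _) hcp))
  exact h Δ hΓΔ ((hΔ A).resolve_left (Δ.2.setConsistent.sp_notMem_of_cn_mem hcn))

theorem cn_mem_iff (hM : M.IsCanonical) : .cn A ∈ Γ.1 ↔ ∀ Δ, M.le Γ Δ → .sp A ∉ Δ.1 := by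
  refine ⟨fun h Δ hΓΔ => Δ.2.setConsistent.sp_notMem_of_cn_mem ((hM.le_iff Γ Δ).1 hΓΔ h),
    fun h => by_contra fun hcn => ?_⟩
  obtain ⟨Δ, hΓΔ, hcp, hΔ⟩ := hM.exists_ge_mem_forall_sp_mem_or_sn_mem
    (.insert_cp_of_not_sderiv_cn (mt (Γ.2.deductivelyClosed _) hcn))
  exact h Δ hΓΔ ((hΔ A).resolve_right (Δ.2.setConsistent.sn_notMem_of_cp_mem hcp))

end KripkeModel.IsCanonical

/-- Main semantic lemma: in the canonical model (worlds = prime theories ordered by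
    inclusion, with V⁺(Γ) = {α : α⁺ ∈ Γ} and V⁻(Γ) = {α : α⁻ ∈ Γ}), forcing
    coincides with membership. -/
theorem main_semantic_lemma
    (M : KripkeModel {Γ : Set MProp // PrimeTheory Γ})
    (hle : ∀ Γ Δ : {Γ : Set MProp // PrimeTheory Γ}, M.le Γ Δ ↔ Γ.1 ⊆ Δ.1)
    (hVp : ∀ (Γ : {Γ : Set MProp // PrimeTheory Γ}) (a : ℕ),
      M.Vp Γ a ↔ MProp.sp (PureProp.var a) ∈ Γ.1)
    (hVn : ∀ (Γ : {Γ : Set MProp // PrimeTheory Γ}) (a : ℕ),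
      M.Vn Γ a ↔ MProp.sn (PureProp.var a) ∈ Γ.1)
    (Γ : {Γ : Set MProp // PrimeTheory Γ}) (P : MProp) :
    Forces M Γ P ↔ P ∈ Γ.1 := by
  have hM : M.IsCanonical := ⟨hle, hVp, hVn⟩
  induction Γ, P using Forces.induct with
  | case1 Γ a => rw [Forces, hVp]
  | case2 Γ a => rw [Forces, hVn]
  | case3 Γ A B ihA ihB => simp only [Forces, ihA, ihB, Γ.2.deductivelyClosed.sp_conj_mem_iff]
  | case4 Γ A B ihA ihB => simp only [Forces, ihA, ihB, Γ.2.sn_conj_mem_iff]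
  | case5 Γ A B ihA ihB => simp only [Forces, ihA, ihB, Γ.2.sp_disj_mem_iff]
  | case6 Γ A B ihA ihB => simp only [Forces, ihA, ihB, Γ.2.deductivelyClosed.sn_disj_mem_iff]
  | case7 Γ A ih => simp only [Forces, ih, Γ.2.deductivelyClosed.sp_neg_mem_iff]
  | case8 Γ A ih => simp only [Forces, ih, Γ.2.deductivelyClosed.sn_neg_mem_iff]
  | case9 Γ A ih => simp only [Forces, hM.cp_mem_iff, ih]
  | case10 Γ A ih => simp only [Forces, hM.cn_mem_iff, ih]
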